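/- arXiv:2405.16660 — 2 statements merged into one kernel-verified Lean document; each statement's English description precedes it below -/
import Mathlib

section
/- Define integers e_n = 2·(c_B(n) − c_A(n)) + 1 for n ≥ 0. Then for every n ≥ 4 the four-term linear recurrence with polynomial coefficients holds: n·e_n = (2n−1)·e_{n−1} − (n−1)·e_{n−2} + (4n−6)·e_{n−3} − (4n−8)·e_{n−4}. In particular Δ_n, and hence the winner of the HH-versus-HT game, can be computed in O(n) arithmetic operations. -/
/-!
Let `D(s) = B(s) - A(s)`, and for an integer offset `k` let `h(n, k)` be the sum of
`sign (D(s) + k)` over all sequences `s` of length `n`, so that `e n = 2 h(n, 0) + 1`.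
Removing the first one or two letters of a sequence gives (`offsetSum_rec`)
`h(n+2, k) = h(n+1, k) + h(n+1, k-1) - h(n, k-1) + h(n, k+1)`,
that is, a linear recurrence in `k` for the generating functions `H_k = ∑ h(n, k) X^n`.
This recurrence determines the family `H_k` (`eq_zero_of_shift_rec`), because it expresses the
coefficient of `X^n` in terms of strictly lower ones. Its characteristic (kernel) equation
`X² σ² - (1 - X) σ + X (1 - X) = 0` has a power series root `σ = X C(X³ / (1 - X))`, with `C` the
Catalan series, and solving in terms of powers of `σ` for `k ≥ 1` and of `ρ = X σ / (1 - X)` for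
`k ≤ 0` gives `H_0` in closed form. The outcome is that the generating function `E` of `e`
satisfies `E² (1 - X) (1 - X - 4 X³) = 1` (`eSeries_sq`). Differentiating and cancelling `2 E`
gives a first order linear differential equation for `E`, whose coefficients are the claimed
recurrence.
-/

/-- Bob's score: number of indices `i < n-1` with `s i = H` and `s (i+1) = T`
    (`true` = heads). -/
def bobScore {n : ℕ} (s : Fin n → Bool) : ℕ :=
  (Finset.univ.filter (fun i : Fin (n - 1) =>
    s ⟨i.1, lt_of_lt_of_le i.2 (Nat.sub_le n 1)⟩ = true ∧
    s ⟨i.1 + 1, Nat.add_lt_of_lt_sub i.2⟩ = false)).card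

/-- Alice's score: number of indices `i < n-1` with `s i = H` and `s (i+1) = H`. -/
def aliceScore {n : ℕ} (s : Fin n → Bool) : ℕ :=
  (Finset.univ.filter (fun i : Fin (n - 1) =>
    s ⟨i.1, lt_of_lt_of_le i.2 (Nat.sub_le n 1)⟩ = true ∧
    s ⟨i.1 + 1, Nat.add_lt_of_lt_sub i.2⟩ = true)).card

/-- Number of length-`n` coin sequences where Bob's score strictly exceeds Alice's. -/
def cB (n : ℕ) : ℕ :=
  (Finset.univ.filter (fun s : Fin n → Bool => aliceScore s < bobScore s)).card

/-- Number of length-`n` coin sequences where Alice's score strictly exceeds Bob's. -/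
def cA (n : ℕ) : ℕ :=
  (Finset.univ.filter (fun s : Fin n → Bool => bobScore s < aliceScore s)).card

/-- `e_n = 2 (c_B(n) - c_A(n)) + 1`. -/
def e (n : ℕ) : ℤ := 2 * ((cB n : ℤ) - (cA n : ℤ)) + 1

/-! ### The kernel equation -/

open PowerSeries in
/-- The power series root `σ` of the kernel equation, together with the companion series
`ρ = X σ / (1 - X)`. -/
lemma exists_kernel_root : ∃ g r : ℤ⟦X⟧,
    X ^ 2 * g ^ 2 - (1 - X) * g + X * (1 - X) = 0 ∧ (1 - X) * r = X * g := by
  set v : ℤ⟦X⟧ := PowerSeries.mk 1 with hv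
  have hv1 : v * (1 - X) = 1 := mk_one_mul_one_sub_eq_one ℤ
  have hs : HasSubst (X ^ 3 * v : ℤ⟦X⟧) := HasSubst.of_constantCoeff_zero' (by simp)
  set c0 : ℤ⟦X⟧ := PowerSeries.map (Nat.castRingHom ℤ) catalanSeries with hc0
  have h0 : c0 ^ 2 * X + 1 = c0 := by
    have := congrArg (PowerSeries.map (Nat.castRingHom ℤ)) catalanSeries_sq_mul_X_add_one
    simpa using this
  have h1 := congrArg (substAlgHom (R := ℤ) hs) h0
  rw [map_add, map_mul, map_pow, map_one, substAlgHom_X] at h1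
  set c : ℤ⟦X⟧ := substAlgHom (R := ℤ) hs c0
  refine ⟨X * c, v * (X * (X * c)), ?_, ?_⟩
  · linear_combination X * (1 - X) * h1 - X ^ 4 * c ^ 2 * hv1
  · linear_combination X * (X * c) * hv1

/-! ### Recurrence for the sums of signs -/

/-- The score difference `B(s) - A(s)`. -/
def scoreDiff {n : ℕ} (s : Fin n → Bool) : ℤ := (bobScore s : ℤ) - aliceScore s

lemma scoreDiff_short {n : ℕ} (hn : n ≤ 1) (s : Fin n → Bool) : scoreDiff s = 0 := by
  have : IsEmpty (Fin (n - 1)) := by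
    rw [Nat.sub_eq_zero_of_le hn]; infer_instance
  simp [scoreDiff, bobScore, aliceScore]

lemma scoreDiff_cons_false {n : ℕ} (s : Fin n → Bool) :
    scoreDiff (Fin.cons false s : Fin (n + 1) → Bool) = scoreDiff s := by
  cases n with
  | zero => rw [scoreDiff_short (by simp), scoreDiff_short (by simp)]
  | succ n =>
    simp only [scoreDiff, bobScore, aliceScore, Finset.card_filter]
    erw [Fin.sum_univ_succ, Fin.sum_univ_succ]
    simp
    rfl

lemma scoreDiff_cons_true_cons {n : ℕ} (b : Bool) (s : Fin n → Bool) :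
    scoreDiff (Fin.cons true (Fin.cons b s : Fin (n + 1) → Bool) : Fin (n + 2) → Bool) =
      (if b then -1 else 1) + scoreDiff (Fin.cons b s : Fin (n + 1) → Bool) := by
  simp only [scoreDiff, bobScore, aliceScore, Finset.card_filter]
  erw [Fin.sum_univ_succ, Fin.sum_univ_succ]
  cases b
  · simp
    rw [add_sub_assoc]
    rfl
  · simp
    rw [← sub_sub, sub_right_comm, sub_eq_add_neg, sub_eq_add_neg, add_comm]
    rfl

/-- Sum of `sign (D(s) + k)` over the sequences `s` of length `n`. -/
def offsetSum (n : ℕ) (k : ℤ) : ℤ := ∑ s : Fin n → Bool, Int.sign (scoreDiff s + k)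

/-- Sum of `sign (D(Hs) + k)` over the sequences `s` of length `n`, where `Hs` is `s` preceded
by a head. -/
def offsetSumHead (n : ℕ) (k : ℤ) : ℤ :=
  ∑ s : Fin n → Bool, Int.sign (scoreDiff (Fin.cons true s : Fin (n + 1) → Bool) + k)

lemma sum_fin_bool_succ {n : ℕ} (f : (Fin (n + 1) → Bool) → ℤ) :
    ∑ s, f s = ∑ s : Fin n → Bool, f (Fin.cons true s) + ∑ s : Fin n → Bool, f (Fin.cons false s) := by
  rw [← (Fin.consEquiv (fun _ : Fin (n + 1) => Bool)).sum_comp, Fintype.sum_prod_type]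
  simp [Fin.consEquiv]

lemma offsetSum_succ (n : ℕ) (k : ℤ) :
    offsetSum (n + 1) k = offsetSumHead n k + offsetSum n k := by
  rw [offsetSum, sum_fin_bool_succ]
  simp only [scoreDiff_cons_false, offsetSum, offsetSumHead]

lemma offsetSumHead_succ (n : ℕ) (k : ℤ) :
    offsetSumHead (n + 1) k = offsetSumHead n (k - 1) + offsetSum n (k + 1) := by
  rw [offsetSumHead, sum_fin_bool_succ]
  simp only [scoreDiff_cons_true_cons, scoreDiff_cons_false, offsetSum, offsetSumHead]
  congr 1 <;> refine Finset.sum_congr rfl fun s _ => ?_ <;> congr 1 <;> simp <;> ring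

lemma offsetSum_rec (n : ℕ) (k : ℤ) :
    offsetSum (n + 2) k = offsetSum (n + 1) k + offsetSum (n + 1) (k - 1) - offsetSum n (k - 1)
      + offsetSum n (k + 1) := by
  have h1 := offsetSum_succ (n + 1) k
  have h2 := offsetSumHead_succ n k
  have h3 := offsetSum_succ n (k - 1)
  linarith

lemma offsetSum_zero (k : ℤ) : offsetSum 0 k = Int.sign k := by
  simp [offsetSum, scoreDiff_short]

lemma offsetSum_one (k : ℤ) : offsetSum 1 k = 2 * Int.sign k := by
  simp [offsetSum, scoreDiff_short]

lemma e_eq_offsetSum (n : ℕ) : e n = 2 * offsetSum n 0 + 1 := by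
  have h : ∀ s : Fin n → Bool, Int.sign (scoreDiff s + 0) =
      (if aliceScore s < bobScore s then 1 else 0) - (if bobScore s < aliceScore s then 1 else 0) := by
    intro s
    rcases lt_trichotomy (aliceScore s) (bobScore s) with h | h | h
    · rw [if_pos h, if_neg (by omega), Int.sign_eq_one_of_pos (by unfold scoreDiff; omega)]; rfl
    · rw [if_neg (by omega), if_neg (by omega)]; simp [scoreDiff, h]
    · rw [if_neg (by omega), if_pos h, Int.sign_eq_neg_one_of_neg (by unfold scoreDiff; omega)]; rfl
  simp only [e, offsetSum, h, Finset.sum_sub_distrib, cA, cB, Finset.card_filter]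
  push_cast
  rfl

/-! ### Solving the recurrence for generating functions -/

open PowerSeries in
/-- Generating function of `n ↦ offsetSum n k`. -/
noncomputable def offsetSeries (k : ℤ) : ℤ⟦X⟧ := PowerSeries.mk fun n => offsetSum n k

open PowerSeries in
lemma offsetSeries_rec (k : ℤ) :
    (1 - X) * offsetSeries k - X * (1 - X) * offsetSeries (k - 1) - X ^ 2 * offsetSeries (k + 1)
      = C (Int.sign k) + X * C (Int.sign k - Int.sign (k - 1)) := by
  have e1 : (1 - X) * offsetSeries k - X * (1 - X) * offsetSeries (k - 1)
        - X ^ 2 * offsetSeries (k + 1) =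
      offsetSeries k - X * (offsetSeries k + offsetSeries (k - 1)
        - X * (offsetSeries (k - 1) - offsetSeries (k + 1))) := by ring
  rw [e1]
  ext n
  rcases n with _ | _ | n
  · simp [offsetSeries, offsetSum_zero]
  · simp [-eq_intCast, offsetSeries, offsetSum_zero, offsetSum_one, coeff_succ_X_mul]
    ring
  · simp [-eq_intCast, offsetSeries, coeff_succ_X_mul, offsetSum_rec]
    ring

open PowerSeries in
/-- A family of power series solving the homogeneous recurrence vanishes: each coefficient is
a combination of coefficients of strictly lower degree. -/
lemma eq_zero_of_shift_rec (K : ℤ → ℤ⟦X⟧)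
    (h : ∀ k, (1 - X) * K k - X * (1 - X) * K (k - 1) - X ^ 2 * K (k + 1) = 0) (k : ℤ) :
    K k = 0 := by
  have h' : ∀ k, K k = X * (K k + K (k - 1) - X * (K (k - 1) - K (k + 1))) := fun k => by
    linear_combination h k
  have key : ∀ n k, coeff n (K k) = 0 := by
    intro n
    induction n using Nat.strong_induction_on with
    | _ n ih =>
      intro k
      rw [h' k]
      rcases n with _ | _ | n
      · simp
      · have h0 : ∀ k, constantCoeff (K k) = 0 := fun k => by
          simpa using ih 0 (by omega) k
        simp [coeff_succ_X_mul, h0]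
      · simp [coeff_succ_X_mul, ih (n + 1), ih n]
  ext n
  simp [key]

open PowerSeries in
/-- The explicit solution of the recurrence, scaled by `2 s (1 - 2X) (1 - X)` with
`s = 1 - X - 2 X² σ` to clear denominators: the constants `± 2 s (1 - X)` are the contributions of
the `± 2^n` term, and the rest decays like a power of `σ` (for `k ≥ 1`) or `ρ` (for `k ≤ 0`). -/
noncomputable def ansatz (g r : ℤ⟦X⟧) (k : ℤ) : ℤ⟦X⟧ :=
  if 1 ≤ k then
    2 * (1 - X - 2 * X ^ 2 * g) * (1 - X) - 2 * (1 - X) * (X - (1 - X) * g) * g ^ (k - 1).toNat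
  else
    -(2 * (1 - X - 2 * X ^ 2 * g) * (1 - X))
      + ((1 - 2 * X) * (1 - X) + (1 - X - 2 * X ^ 2 * g)) * r ^ (-k).toNat

open PowerSeries in
lemma ansatz_rec (g r : ℤ⟦X⟧) (hg : X ^ 2 * g ^ 2 - (1 - X) * g + X * (1 - X) = 0)
    (hr : (1 - X) * r = X * g) (k : ℤ) :
    (1 - X) * ansatz g r k - X * (1 - X) * ansatz g r (k - 1) - X ^ 2 * ansatz g r (k + 1)
      = 2 * (1 - X - 2 * X ^ 2 * g) * (1 - 2 * X) * (1 - X) *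
        (C (Int.sign k) + X * C (Int.sign k - Int.sign (k - 1))) := by
  -- `ρ` is the inverse of the second root of the kernel equation.
  have hr2 : (1 - X) * r - X * (1 - X) * r ^ 2 - X ^ 2 = 0 := by
    have hX : (1 - X : ℤ⟦X⟧) ≠ 0 := fun h => by
      have := congrArg constantCoeff h
      simp at this
    apply mul_left_cancel₀ hX
    linear_combination (-X) * hg + (1 - X - X * ((1 - X) * r + X * g)) * hr
  rcases lt_trichotomy k 0 with hk | rfl | hk
  · obtain ⟨j, rfl⟩ : ∃ j : ℕ, k = -(j + 1 : ℤ) := ⟨(-k - 1).toNat, by omega⟩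
    have t1 : (-(-(j + 1 : ℤ))).toNat = j + 1 := by omega
    have t2 : (-(-(j + 1 : ℤ) - 1)).toNat = j + 2 := by omega
    have t3 : (-(-(j + 1 : ℤ) + 1)).toNat = j := by omega
    rw [ansatz, ansatz, ansatz, if_neg (by omega), if_neg (by omega), if_neg (by omega), t1, t2, t3,
      Int.sign_eq_neg_one_of_neg (by omega), Int.sign_eq_neg_one_of_neg (by omega)]
    simp only [sub_self, map_zero, map_neg, map_one]
    linear_combination ((1 - 2 * X) * (1 - X) + (1 - X - 2 * X ^ 2 * g)) * r ^ j * hr2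
  · simp [ansatz]
    grind
  · obtain rfl | hk := (show k = 1 ∨ 2 ≤ k by omega)
    · simp [ansatz]
      grind
    · obtain ⟨j, rfl⟩ : ∃ j : ℕ, k = j + 2 := ⟨(k - 2).toNat, by omega⟩
      have t1 : ((j + 2 : ℤ) - 1).toNat = j + 1 := by omega
      have t2 : ((j + 2 : ℤ) - 1 - 1).toNat = j := by omega
      have t3 : ((j + 2 : ℤ) + 1 - 1).toNat = j + 2 := by omega
      rw [ansatz, ansatz, ansatz, if_pos (by omega), if_pos (by omega), if_pos (by omega), t1, t2,
        t3, Int.sign_eq_one_of_pos (by omega), Int.sign_eq_one_of_pos (by omega)]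
      simp only [sub_self, map_zero, map_one]
      linear_combination 2 * (1 - X) * (X - (1 - X) * g) * g ^ j * hg

/-! ### The algebraic and the differential equation of the generating function -/

open PowerSeries in
/-- Generating function of `e`. -/
noncomputable def eSeries : ℤ⟦X⟧ := PowerSeries.mk e

open PowerSeries in
theorem eSeries_sq : eSeries ^ 2 * ((1 - X) * (1 - X - 4 * X ^ 3)) = 1 := by
  obtain ⟨g, r, hg, hr⟩ := exists_kernel_root
  have h0 := eq_zero_of_shift_rec
    (fun k => 2 * (1 - X - 2 * X ^ 2 * g) * (1 - 2 * X) * (1 - X) * offsetSeries k - ansatz g r k)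
    (fun k => by
      linear_combination 2 * (1 - X - 2 * X ^ 2 * g) * (1 - 2 * X) * (1 - X) * offsetSeries_rec k
        - ansatz_rec g r hg hr k) 0
  simp only [ansatz, show ¬ (1 : ℤ) ≤ 0 by norm_num, if_false, neg_zero, Int.toNat_zero, pow_zero,
    mul_one] at h0
  have hE : eSeries * (1 - X) = 2 * offsetSeries 0 * (1 - X) + 1 := by
    have h1 : eSeries = 2 * offsetSeries 0 + PowerSeries.mk 1 := by
      ext n
      simp [eSeries, offsetSeries, e_eq_offsetSum, two_mul]
    rw [h1, add_mul, mk_one_mul_one_sub_eq_one]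
  have n1 : (1 - X : ℤ⟦X⟧) ≠ 0 := fun h => by
    have := congrArg constantCoeff h
    simp at this
  have n2 : (1 - 2 * X : ℤ⟦X⟧) ≠ 0 := fun h => by
    have := congrArg constantCoeff h
    simp at this
  have h2 : (1 - X - 2 * X ^ 2 * g) * eSeries = 1 := by
    apply mul_left_cancel₀ (mul_ne_zero n2 n1)
    linear_combination h0 + (1 - 2 * X) * (1 - X - 2 * X ^ 2 * g) * hE
  have h3 : (1 - X - 2 * X ^ 2 * g) ^ 2 = (1 - X) * (1 - X - 4 * X ^ 3) := by
    linear_combination 4 * X ^ 2 * hg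
  rw [← h3, mul_comm, ← mul_pow, h2, one_pow]

open PowerSeries in
theorem eSeries_ode : (1 - X) * (1 - X - 4 * X ^ 3) * d⁄dX ℤ eSeries
    = (1 - X + 6 * X ^ 2 - 8 * X ^ 3) * eSeries := by
  have h := congrArg (d⁄dX ℤ) eSeries_sq
  have hS : d⁄dX ℤ ((1 - X) * (1 - X - 4 * X ^ 3) : ℤ⟦X⟧)
      = -2 * (1 - X + 6 * X ^ 2 - 8 * X ^ 3) := by
    have : ((1 - X) * (1 - X - 4 * X ^ 3) : ℤ⟦X⟧)
        = 1 - (2 : ℤ) • X + X ^ 2 - (4 : ℤ) • X ^ 3 + (4 : ℤ) • X ^ 4 := by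
      simp only [zsmul_eq_mul]; push_cast; ring
    rw [this]
    simp only [map_add, map_sub, map_zsmul, derivative_pow, derivative_X, derivative_one]
    simp only [zsmul_eq_mul]
    push_cast
    ring
  rw [Derivation.leibniz, hS, derivative_pow, derivative_one] at h
  simp only [smul_eq_mul] at h
  have hE : eSeries ≠ 0 := fun h0 => by
    have := eSeries_sq
    simp [h0] at this
  have h2 : (2 : ℤ⟦X⟧) ≠ 0 := fun h => by
    have := congrArg constantCoeff h
    rw [map_ofNat, map_zero] at this
    norm_num at this
  apply mul_left_cancel₀ (mul_ne_zero h2 hE)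
  push_cast at h
  linear_combination h

open PowerSeries in
/-- The differential equation arranged in Horner form in `X`, ready for reading off coefficients. -/
lemma eSeries_ode_expanded : d⁄dX ℤ eSeries = eSeries + X * (C 2 * d⁄dX ℤ eSeries - eSeries +
    X * (C 6 * eSeries - d⁄dX ℤ eSeries + X * (C 4 * d⁄dX ℤ eSeries - C 8 * eSeries -
      X * (C 4 * d⁄dX ℤ eSeries)))) := by
  simp only [map_ofNat]
  linear_combination eSeries_ode

/-- Four-term linear recurrence with polynomial coefficients:
    `n eₙ = (2n-1) eₙ₋₁ - (n-1) eₙ₋₂ + (4n-6) eₙ₋₃ - (4n-8) eₙ₋₄` for `n ≥ 4`. -/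
theorem e_recurrence (n : ℕ) (hn : 4 ≤ n) :
    (n : ℤ) * e n =
      (2 * (n : ℤ) - 1) * e (n - 1) - ((n : ℤ) - 1) * e (n - 2) +
        (4 * (n : ℤ) - 6) * e (n - 3) - (4 * (n : ℤ) - 8) * e (n - 4) := by
  obtain ⟨m, rfl⟩ : ∃ m, n = m + 4 := ⟨n - 4, by omega⟩
  have h := congrArg (PowerSeries.coeff (m + 3)) eSeries_ode_expanded
  simp only [PowerSeries.coeff_succ_X_mul, map_add, map_sub, PowerSeries.coeff_C_mul,
    PowerSeries.coeff_derivative, eSeries, PowerSeries.coeff_mk, add_assoc, Nat.reduceAdd] at h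
  simp only [show m + 4 - 1 = m + 3 by omega, show m + 4 - 2 = m + 2 by omega,
    show m + 4 - 3 = m + 1 by omega, show m + 4 - 4 = m by omega]
  have h4 : PowerSeries.coeff m (PowerSeries.X * (PowerSeries.C 4 *
      PowerSeries.derivative ℤ (PowerSeries.mk e))) = 4 * (e m * m) := by
    rcases m with _ | m
    · simp
    · rw [PowerSeries.coeff_succ_X_mul, PowerSeries.coeff_C_mul, PowerSeries.coeff_derivative,
        PowerSeries.coeff_mk]
      push_cast
      rfl
  rw [h4] at h
  push_cast at h ⊢
  linear_combination h
end

section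
/- For every n ≥ 4, the rational numbers Δ_n satisfy the recurrence Δ_n = 1/(n·2ⁿ) + (1/(2n) − 1/4)·Δ_{n−4} + (−3/(4n) + 1/2)·Δ_{n−3} + (1/(4n) − 1/4)·Δ_{n−2} + (−1/(2n) + 1)·Δ_{n−1}. -/
/-- `Δ_n = (c_B(n) - c_A(n)) / 2^n`, as a rational number. -/
def Δ (n : ℕ) : ℚ := ((cB n : ℚ) - (cA n : ℚ)) / 2 ^ n

open PowerSeries

/-! ### Scores and the first toss -/

lemma bobScore_cons_succ (p : Bool) {n : ℕ} (s : Fin (n + 1) → Bool) :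
    bobScore (Fin.cons p s : Fin (n + 2) → Bool) =
      (if p = true ∧ s 0 = false then 1 else 0) + bobScore s := by
  unfold bobScore
  rw [Finset.card_filter, Finset.card_filter]
  exact Fin.sum_univ_succ (n := n) _

lemma aliceScore_cons_succ (p : Bool) {n : ℕ} (s : Fin (n + 1) → Bool) :
    aliceScore (Fin.cons p s : Fin (n + 2) → Bool) =
      (if p = true ∧ s 0 = true then 1 else 0) + aliceScore s := by
  unfold aliceScore
  rw [Finset.card_filter, Finset.card_filter]
  exact Fin.sum_univ_succ (n := n) _

lemma bobScore_one (s : Fin 1 → Bool) : bobScore s = 0 := rfl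

lemma aliceScore_one (s : Fin 1 → Bool) : aliceScore s = 0 := rfl

lemma bobScore_cons_false {n : ℕ} (s : Fin n → Bool) :
    bobScore (Fin.cons false s : Fin (n + 1) → Bool) = bobScore s := by
  cases n with
  | zero => rfl
  | succ n => simp [bobScore_cons_succ]

lemma aliceScore_cons_false {n : ℕ} (s : Fin n → Bool) :
    aliceScore (Fin.cons false s : Fin (n + 1) → Bool) = aliceScore s := by
  cases n with
  | zero => rfl
  | succ n => simp [aliceScore_cons_succ]

/-- The sum, over all sequences `s` of length `n`, of the sign of Bob's lead with handicap `j`, where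
the scores are those of `s` preceded by the toss `p`. -/
def signSum (p : Bool) (n : ℕ) (j : ℤ) : ℤ :=
  ∑ s : Fin n → Bool, Int.sign ((bobScore (Fin.cons p s : Fin (n + 1) → Bool) : ℤ) -
    aliceScore (Fin.cons p s : Fin (n + 1) → Bool) - j)

lemma signSum_zero (p : Bool) (j : ℤ) : signSum p 0 j = -Int.sign j := by
  simp [signSum, bobScore_one, aliceScore_one]

lemma sum_cons {n : ℕ} (f : (Fin (n + 1) → Bool) → ℤ) :
    ∑ s, f s = ∑ s : Fin n → Bool, f (Fin.cons false s) + ∑ s : Fin n → Bool, f (Fin.cons true s) := by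
  rw [← (Fin.consEquiv (fun _ : Fin (n + 1) => Bool)).sum_comp, Fintype.sum_prod_type,
    Fintype.sum_bool, add_comm]
  rfl

lemma signSum_false_succ (n : ℕ) (j : ℤ) :
    signSum false (n + 1) j = signSum false n j + signSum true n j := by
  unfold signSum
  rw [sum_cons]
  simp only [bobScore_cons_false, aliceScore_cons_false]

lemma signSum_true_succ (n : ℕ) (j : ℤ) :
    signSum true (n + 1) j = signSum false n (j - 1) + signSum true n (j + 1) := by
  unfold signSum
  rw [sum_cons]
  congr 1 <;> refine Finset.sum_congr rfl fun s _ => congrArg Int.sign ?_ <;>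
    rw [bobScore_cons_succ, aliceScore_cons_succ] <;> simp <;> ring

lemma signSum_eq (n : ℕ) : signSum false n 0 = (cB n : ℤ) - cA n := by
  unfold signSum cB cA
  simp only [bobScore_cons_false, aliceScore_cons_false, Finset.card_filter]
  push_cast
  rw [← Finset.sum_sub_distrib]
  refine Finset.sum_congr rfl fun s _ => ?_
  rcases lt_trichotomy (bobScore s) (aliceScore s) with h | h | h
  · rw [Int.sign_eq_neg_one_of_neg (by omega)]
    simp [h, not_lt.mpr h.le]
  · simp [h]
  · rw [Int.sign_eq_one_of_pos (by omega)]
    simp [h, not_lt.mpr h.le]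

/-! ### Solving the linear system -/

/-- The system obtained by conditioning on the first toss determines the generating functions of
`signSum`. -/
lemma coeff_eq_signSum (FT FH : ℤ → ℚ⟦X⟧)
    (hT : ∀ j, FT j = C (-(Int.sign j : ℚ)) + X * FT j + X * FH j)
    (hH : ∀ j, FH j = C (-(Int.sign j : ℚ)) + X * FT (j - 1) + X * FH (j + 1)) (n : ℕ) :
    ∀ j, coeff n (FT j) = signSum false n j ∧ coeff n (FH j) = signSum true n j := by
  induction n with
  | zero =>
    intro j
    rw [hT, hH]
    simp [signSum_zero]
  | succ n ih =>
    intro j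
    constructor
    · rw [hT, signSum_false_succ]
      simp [coeff_succ_X_mul, ih, -map_neg]
    · rw [hH, signSum_true_succ]
      simp [coeff_succ_X_mul, ih, -map_neg]

/-- A rescaled Catalan series `E = C(X³ / (1 - X)) / (1 - X)`, where `C = 1 + X C²`. -/
lemma exists_E : ∃ E : ℚ⟦X⟧, X ^ 3 * (1 - X) * E ^ 2 - (1 - X) * E + 1 = 0 := by
  have hQ : (1 - X : ℚ⟦X⟧) * (1 - X)⁻¹ = 1 := PowerSeries.mul_inv_cancel _ (by simp)
  set Q : ℚ⟦X⟧ := (1 - X)⁻¹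
  have hs : HasSubst (X ^ 3 * Q : ℚ⟦X⟧) := HasSubst.of_constantCoeff_zero' (by simp)
  have hc := congrArg (fun f => substAlgHom (R := ℚ) hs (PowerSeries.map (Nat.castRingHom ℚ) f))
    catalanSeries_sq_mul_X_add_one
  simp only [map_add, map_mul, map_pow, map_one, PowerSeries.map_X, substAlgHom_X] at hc
  set c := substAlgHom (R := ℚ) hs (PowerSeries.map (Nat.castRingHom ℚ) catalanSeries)
  refine ⟨Q * c, ?_⟩
  linear_combination hc + (X ^ 3 * Q * c ^ 2 - c) * hQ

/-- The closed form `2 ∑ (c_B(n) - c_A(n)) Xⁿ = R - 1 / (1 - X)`, where `R² P = 1` is expressed through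
the square root `S` of `P`. -/
lemma exists_closed_form : ∃ R S : ℚ⟦X⟧, R * S = 1 ∧
    S ^ 2 = 1 - 2 * X + X ^ 2 - 4 * X ^ 3 + 4 * X ^ 4 ∧
    ∀ n, coeff n R = 2 * ((cB n : ℚ) - cA n) + 1 := by
  obtain ⟨E, hE⟩ := exists_E
  obtain ⟨U, hU⟩ : ∃ U : ℚ⟦X⟧, (1 - 2 * X) * U = 1 :=
    ⟨_, PowerSeries.mul_inv_cancel _ (by simp)⟩
  have hQ : (1 - X) * (PowerSeries.mk 1 : ℚ⟦X⟧) = 1 := by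
    rw [mul_comm]; exact PowerSeries.mk_one_mul_one_sub_eq_one ℚ
  obtain ⟨Q, hQdef⟩ : ∃ Q : ℚ⟦X⟧, Q = PowerSeries.mk 1 := ⟨_, rfl⟩
  rw [← hQdef] at hQ
  obtain ⟨R, hR⟩ : ∃ R : ℚ⟦X⟧, ((1 - X) * (1 - 2 * X ^ 3 * E)) * R = 1 :=
    ⟨_, PowerSeries.mul_inv_cancel _ (by simp)⟩
  -- `a` and `X * b` are the amplitudes of the geometric solutions for `j ≥ 0` and `j < 0`,
  -- determined by the two equations that involve both sides.
  obtain ⟨b, hb⟩ : ∃ b, b = (X ^ 2 * E - 1) * R * U := ⟨_, rfl⟩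
  obtain ⟨a, ha⟩ : ∃ a, a = X * b + Q * U := ⟨_, rfl⟩
  let FT : ℤ → ℚ⟦X⟧ := fun j => match j with
    | .ofNat k => -U + a * (X ^ 2 * E) ^ k
    | .negSucc k => U + X * b * (X * (1 - X) * E) ^ (k + 1)
  let FH : ℤ → ℚ⟦X⟧ := fun j => match j with
    | .ofNat 0 => U + b * (1 - X)
    | .ofNat (k + 1) => -U + a * (1 - X) * X * E * (X ^ 2 * E) ^ k
    | .negSucc k => U + b * (1 - X) * (X * (1 - X) * E) ^ (k + 1)
  have hT : ∀ j, FT j = C (-(Int.sign j : ℚ)) + X * FT j + X * FH j := by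
    rintro ((_ | k) | k)
    · change -U + a * (X ^ 2 * E) ^ 0 = C (-((0 : ℤ) : ℚ)) + X * (-U + a * (X ^ 2 * E) ^ 0)
        + X * (U + b * (1 - X))
      simp only [Int.cast_zero, neg_zero, map_zero]
      linear_combination U * hQ + (1 - X) * ha
    · change -U + a * (X ^ 2 * E) ^ (k + 1) = C (-((1 : ℤ) : ℚ))
        + X * (-U + a * (X ^ 2 * E) ^ (k + 1))
        + X * (-U + a * (1 - X) * X * E * (X ^ 2 * E) ^ k)
      simp only [Int.cast_one, map_neg, map_one]
      linear_combination -hU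
    · change U + X * b * (X * (1 - X) * E) ^ (k + 1) = C (-((-1 : ℤ) : ℚ))
        + X * (U + X * b * (X * (1 - X) * E) ^ (k + 1))
        + X * (U + b * (1 - X) * (X * (1 - X) * E) ^ (k + 1))
      simp only [Int.cast_one, Int.cast_neg, neg_neg, map_one]
      linear_combination hU
  have hH : ∀ j, FH j = C (-(Int.sign j : ℚ)) + X * FT (j - 1) + X * FH (j + 1) := by
    rintro ((_ | k) | k)
    · change U + b * (1 - X) = C (-((0 : ℤ) : ℚ)) + X * (U + X * b * (X * (1 - X) * E) ^ (0 + 1))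
        + X * (-U + a * (1 - X) * X * E * (X ^ 2 * E) ^ 0)
      simp only [Int.cast_zero, neg_zero, map_zero]
      linear_combination (X ^ 2 * E - 1) * U * hR - X ^ 2 * E * U * hQ
        + (1 - X) * (1 - 2 * X ^ 3 * E) * hb - (1 - X) * X ^ 2 * E * ha
    · have e1 : Int.ofNat (k + 1) - 1 = Int.ofNat k := by simp
      have e2 : Int.ofNat (k + 1) + 1 = Int.ofNat (k + 1 + 1) := by simp
      rw [e1, e2]
      change -U + a * (1 - X) * X * E * (X ^ 2 * E) ^ k = C (-((1 : ℤ) : ℚ))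
        + X * (-U + a * (X ^ 2 * E) ^ k)
        + X * (-U + a * (1 - X) * X * E * (X ^ 2 * E) ^ (k + 1))
      simp only [Int.cast_one, map_neg, map_one]
      linear_combination -hU - a * (X ^ 2 * E) ^ k * X * hE
    · have e1 : Int.negSucc k - 1 = Int.negSucc (k + 1) := by
        simp only [Int.negSucc_eq]; push_cast; ring
      have e2 : FH (Int.negSucc k + 1) = U + b * (1 - X) * (X * (1 - X) * E) ^ k := by
        cases k with
        | zero =>
          change U + b * (1 - X) = _
          ring
        | succ k =>
          have e3 : Int.negSucc (k + 1) + 1 = Int.negSucc k := by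
            simp only [Int.negSucc_eq]; push_cast; ring
          rw [e3]
      rw [e1, e2]
      change U + b * (1 - X) * (X * (1 - X) * E) ^ (k + 1) = C (-((-1 : ℤ) : ℚ))
        + X * (U + X * b * (X * (1 - X) * E) ^ (k + 1 + 1))
        + X * (U + b * (1 - X) * (X * (1 - X) * E) ^ k)
      simp only [Int.cast_one, Int.cast_neg, neg_neg, map_one]
      linear_combination hU - b * (1 - X) * X * (X * (1 - X) * E) ^ k * hE
  have hD : R = FT 0 + FT 0 + Q := by
    change R = -U + a * (X ^ 2 * E) ^ 0 + (-U + a * (X ^ 2 * E) ^ 0) + Q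
    rw [ha, hb]
    linear_combination (-2 * U - U * R * (1 - 2 * X ^ 3 * E)) * hQ + U * Q * hR + (Q - R) * hU
  refine ⟨R, (1 - X) * (1 - 2 * X ^ 3 * E), by rw [mul_comm]; exact hR, ?_, fun n => ?_⟩
  · linear_combination 4 * X ^ 3 * (1 - X) * hE
  · have h1 := (coeff_eq_signSum FT FH hT hH n 0).1
    rw [signSum_eq] at h1
    rw [hD, map_add, map_add, h1, hQdef]
    simp
    ring

/-! ### The differential equation -/

/-- The differential equation `2 P R' + P' R = 0` for `R = P ^ (-1/2)`, read off coefficientwise. -/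
lemma coeff_recurrence {R S : ℚ⟦X⟧} (hRS : R * S = 1)
    (hS : S ^ 2 = 1 - 2 * X + X ^ 2 - 4 * X ^ 3 + 4 * X ^ 4) (m : ℕ) :
    ((m : ℚ) + 4) * coeff (m + 4) R = (2 * m + 7) * coeff (m + 3) R - (m + 3) * coeff (m + 2) R
      + (4 * m + 10) * coeff (m + 1) R - (4 * m + 8) * coeff m R := by
  have h1 := congrArg (d⁄dX ℚ) hRS
  have h2 := congrArg (d⁄dX ℚ) hS
  have c2 : (2 : ℚ⟦X⟧) = C 2 := by rw [map_ofNat]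
  have c4 : (4 : ℚ⟦X⟧) = C 4 := by rw [map_ofNat]
  rw [c2, c4] at h2
  simp only [Derivation.leibniz, Derivation.leibniz_pow, map_add, map_sub, derivative_C,
    derivative_X, derivative_one, smul_eq_mul, nsmul_eq_mul] at h1 h2
  rw [← c2, ← c4] at h2
  have h2' : S * d⁄dX ℚ S = -1 + X - 6 * X ^ 2 + 8 * X ^ 3 := by
    have h0 : (2 : ℚ⟦X⟧) ≠ 0 := fun h => by
      have h' := congrArg constantCoeff h
      rw [map_ofNat, map_zero] at h'
      norm_num at h'
    apply mul_left_cancel₀ h0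
    push_cast at h2
    linear_combination h2
  have h3 : d⁄dX ℚ R - (2 : ℚ) • (X * d⁄dX ℚ R) + X * (X * d⁄dX ℚ R)
      - (4 : ℚ) • (X * (X * (X * d⁄dX ℚ R))) + (4 : ℚ) • (X * (X * (X * (X * d⁄dX ℚ R))))
      - R + X * R - (6 : ℚ) • (X * (X * R)) + (8 : ℚ) • (X * (X * (X * R))) = 0 := by
    simp only [smul_eq_C_mul, map_ofNat]
    linear_combination S * h1 - d⁄dX ℚ R * hS - R * h2'
  have h4 := congrArg (coeff (m + 3)) h3
  -- For `m = 0` the coefficient of `X ^ 4 * R'` vanishes rather than being that of `X ^ (m - 1)`.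
  cases m with
  | zero =>
    simp only [map_add, map_sub, map_zero, coeff_smul, smul_eq_mul, coeff_succ_X_mul,
      coeff_zero_X_mul, coeff_derivative] at h4
    push_cast at h4 ⊢
    linear_combination h4
  | succ m =>
    simp only [map_add, map_sub, map_zero, coeff_smul, smul_eq_mul, coeff_succ_X_mul,
      coeff_derivative] at h4
    push_cast at h4 ⊢
    linear_combination h4

/-- The recurrence
    `Δₙ = 1/(n 2ⁿ) + (1/(2n) - 1/4) Δₙ₋₄ + (-3/(4n) + 1/2) Δₙ₋₃ + (1/(4n) - 1/4) Δₙ₋₂ + (-1/(2n) + 1) Δₙ₋₁`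
    for all `n ≥ 4`. -/
theorem delta_recurrence (n : ℕ) (hn : 4 ≤ n) :
    Δ n = 1 / ((n : ℚ) * 2 ^ n) +
      (1 / (2 * (n : ℚ)) - 1 / 4) * Δ (n - 4) +
      (-3 / (4 * (n : ℚ)) + 1 / 2) * Δ (n - 3) +
      (1 / (4 * (n : ℚ)) - 1 / 4) * Δ (n - 2) +
      (-1 / (2 * (n : ℚ)) + 1) * Δ (n - 1) := by
  obtain ⟨R, S, hRS, hS, hR⟩ := exists_closed_form
  obtain ⟨m, rfl⟩ := Nat.exists_eq_add_of_le' hn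
  have h := coeff_recurrence hRS hS m
  simp only [hR] at h
  have e1 : m + 4 - 1 = m + 3 := rfl
  have e2 : m + 4 - 2 = m + 2 := rfl
  have e3 : m + 4 - 3 = m + 1 := rfl
  have e4 : m + 4 - 4 = m := rfl
  rw [e1, e2, e3, e4]
  unfold Δ
  have hm : (m : ℚ) + 4 ≠ 0 := by positivity
  push_cast
  simp only [pow_add]
  field_simp
  linarith
end
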